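/- Let b be a D-sequence, let N be a natural number and let k ∈ 𝕋 = ℝ/ℤ. Suppose that for every m ≥ N and every integer i with 1 ≤ i ≤ q_{m+1}, the element (i·b_m)·k lies in 𝕋_+. Then b_N·k = 0 in 𝕋 (equivalently, k is a torsion element of 𝕋 whose order divides b_N). -/

import Mathlib

/-- A `D`-sequence: `b 0 = 1`, consecutive terms are distinct, and each term
divides the next. -/
def IsDSequence (b : ℕ → ℕ) : Prop :=
  b 0 = 1 ∧ (∀ n, b n ≠ b (n + 1)) ∧ ∀ n, b n ∣ b (n + 1)

/-- For a D-sequence, `q (j+1) = b (j+1) / b j`. -/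
def qRatio (b : ℕ → ℕ) (j : ℕ) : ℕ := b (j + 1) / b j

/-- `𝕋_+`: the set of points of `𝕋 = ℝ/ℤ` at distance at most `1/4` from `0`. -/
def Tplus : Set (AddCircle (1 : ℝ)) := {x | ‖x‖ ≤ 1 / 4}

lemma aux_norm_nsmul (x : AddCircle (1 : ℝ)) (n : ℕ) (h : (n : ℝ) * ‖x‖ ≤ 1 / 2) :
    ‖n • x‖ = n * ‖x‖ := by
  obtain ⟨r, rfl, hr⟩ : ∃ r : ℝ, (r : AddCircle (1 : ℝ)) = x ∧ ‖x‖ = |r| := by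
    induction x using QuotientAddGroup.induction_on with
    | H y =>
      have hy : ((y - round y : ℝ) : AddCircle (1 : ℝ)) = (y : AddCircle (1 : ℝ)) := by
        have := AddCircle.coe_eq_zero_iff (1 : ℝ) (x := (round y : ℝ))
        rw [AddCircle.coe_sub, this.2 ⟨round y, by simp⟩, sub_zero]
      refine ⟨y - round y, hy, ?_⟩
      have := AddCircle.norm_eq (1 : ℝ) (x := y)
      simpa using this
  rw [hr] at h ⊢
  rw [← AddCircle.coe_nsmul, (AddCircle.norm_coe_eq_abs_iff (1 : ℝ) one_ne_zero).2]
  · simp [abs_mul]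
  · simpa [abs_mul] using h

lemma aux_mul_norm (x : AddCircle (1 : ℝ)) (q : ℕ)
    (h : ∀ i : ℕ, 1 ≤ i → i ≤ q → ‖i • x‖ ≤ 1 / 4) :
    ∀ i : ℕ, i ≤ q → ‖i • x‖ = i * ‖x‖ := by
  intro i
  induction i with
  | zero => simp
  | succ i ih =>
    intro hi
    apply aux_norm_nsmul
    have h1 := h 1 le_rfl (by omega)
    rw [one_smul] at h1
    have h2 : (i : ℝ) * ‖x‖ ≤ 1 / 4 := by
      rcases Nat.eq_zero_or_pos i with h0 | h0
      · simp [h0]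
      · rw [← ih (by omega)]
        exact h i h0 (by omega)
    push_cast
    linarith

theorem polar_character_annihilated (b : ℕ → ℕ) (hb : IsDSequence b) (N : ℕ)
    (k : AddCircle (1 : ℝ))
    (hmult : ∀ m, N ≤ m → ∀ i : ℕ, 1 ≤ i → i ≤ qRatio b m → (i * b m) • k ∈ Tplus) :
    b N • k = 0 := by
  obtain ⟨-, hne, hdvd⟩ := hb
  have hpos : ∀ n, b n ≠ 0 := by
    intro n h0
    have h1 := hdvd n
    rw [h0, zero_dvd_iff] at h1
    exact hne n (by rw [h0, h1])
  have hq : ∀ n, 2 ≤ qRatio b n ∧ b (n + 1) = qRatio b n * b n := by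
    intro n
    have h1 : qRatio b n * b n = b (n + 1) := Nat.div_mul_cancel (hdvd n)
    refine ⟨?_, h1.symm⟩
    by_contra hlt
    have h2 := hpos (n + 1)
    have h3 := hne n
    obtain h | h : qRatio b n = 0 ∨ qRatio b n = 1 := by omega
    · rw [h] at h1; omega
    · rw [h] at h1; omega
  have key : ∀ m, N ≤ m → ∀ i : ℕ, 1 ≤ i → i ≤ qRatio b m → ‖i • (b m • k)‖ ≤ 1 / 4 := by
    intro m hm i h1 h2
    have := hmult m hm i h1 h2
    rw [mul_smul] at this
    exact this
  have step : ∀ m, N ≤ m → 2 * ‖b m • k‖ ≤ ‖b (m + 1) • k‖ := by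
    intro m hm
    have h1 := aux_mul_norm (b m • k) (qRatio b m) (key m hm) _ le_rfl
    rw [(hq m).2, mul_smul, h1]
    have : (2 : ℝ) ≤ qRatio b m := by exact_mod_cast (hq m).1
    gcongr
  have grow : ∀ j : ℕ, 2 ^ j * ‖b N • k‖ ≤ ‖b (N + j) • k‖ := by
    intro j
    induction j with
    | zero => simp
    | succ j ih =>
      have := step (N + j) (by omega)
      rw [← add_assoc, pow_succ]
      linarith
  by_contra hcon
  have hp : 0 < ‖b N • k‖ := norm_pos_iff.2 hcon
  obtain ⟨j, hj⟩ := pow_unbounded_of_one_lt (1 / ‖b N • k‖) (one_lt_two (α := ℝ))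
  rw [div_lt_iff₀ hp] at hj
  have h1 := grow j
  have h2 := key (N + j) (by omega) 1 le_rfl (by linarith [(hq (N + j)).1])
  rw [one_smul] at h2
  linarith
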